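/- arXiv:1602.06817 — 2 statements merged into one kernel-verified Lean document; each statement's English description precedes it below -/
import Mathlib

section
/- Let G be a bull-free graph and let C be an induced 5-cycle in G. If z is a vertex with no neighbor on C and z is adjacent to a vertex x outside C that has exactly k neighbors on C with k ≥ 1, then k ∈ {1, 2, 5}. -/
open SimpleGraph

variable {V : Type*}

/-- The vertices `a b c d e` induce a bull in `G` (edges ab, bc, cd, be, ce). -/
def IsBull (G : SimpleGraph V) (a b c d e : V) : Prop :=
  a ≠ b ∧ a ≠ c ∧ a ≠ d ∧ a ≠ e ∧ b ≠ c ∧ b ≠ d ∧ b ≠ e ∧ c ≠ d ∧ c ≠ e ∧ d ≠ e ∧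
  G.Adj a b ∧ G.Adj b c ∧ G.Adj c d ∧ G.Adj b e ∧ G.Adj c e ∧
  ¬ G.Adj a c ∧ ¬ G.Adj a d ∧ ¬ G.Adj a e ∧ ¬ G.Adj b d ∧ ¬ G.Adj d e

/-- `G` contains no induced bull. -/
def BullFree (G : SimpleGraph V) : Prop := ∀ a b c d e : V, ¬ IsBull G a b c d e

/-- `G` contains no induced path on six vertices. -/
def P6Free (G : SimpleGraph V) : Prop :=
  ¬ ∃ p : Fin 6 → V, Function.Injective p ∧
      ∀ i j : Fin 6, G.Adj (p i) (p j) ↔ (i.val + 1 = j.val ∨ j.val + 1 = i.val)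

/-- `c` lists the vertices of an induced 5-cycle in `G` (indices mod 5). -/
def IsInducedC5 (G : SimpleGraph V) (c : Fin 5 → V) : Prop :=
  Function.Injective c ∧ ∀ i j : Fin 5, G.Adj (c i) (c j) ↔ (j = i + 1 ∨ i = j + 1)

/-- `S` is a homogeneous set in `G`. -/
def IsHomogeneous (G : SimpleGraph V) (S : Set V) : Prop :=
  ∀ v ∉ S, (∀ s ∈ S, G.Adj v s) ∨ (∀ s ∈ S, ¬ G.Adj v s)

/-- `S` is a proper homogeneous set: homogeneous, of size at least two, not all of `V`. -/
def IsProperHomogeneous (G : SimpleGraph V) (S : Set V) : Prop :=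
  IsHomogeneous G S ∧ (∃ a ∈ S, ∃ b ∈ S, a ≠ b) ∧ S ≠ Set.univ

/-- A graph is prime if it has no proper homogeneous set. -/
def IsPrimeGraph (G : SimpleGraph V) : Prop := ¬ ∃ S : Set V, IsProperHomogeneous G S

/-- Number of neighbors of `x` on the 5-cycle `c`. -/
def nbrCount (G : SimpleGraph V) [DecidableRel G.Adj] (c : Fin 5 → V) (x : V) : ℕ :=
  (Finset.univ.filter fun i : Fin 5 => G.Adj x (c i)).card

/-!
Let `z` see `x` and miss a triangle-free induced subgraph `H`. If `x` sees both ends of an edge `bc`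
of `H`, then `x` sees every further `H`-neighbour `a` of `b`: otherwise `z, x, b, a` and `c` form a
bull on the triangle `xbc` with horns `z` and `a`. Hence, when `H` is connected, the neighbours of
`x` in `H` form an independent set or are all of `H`. An independent set of a 5-cycle has at most
two vertices.
-/

theorem BullFree.adj_of_pendant_triangle {G : SimpleGraph V} (hG : BullFree G) {a b c x z : V}
    (hzx : G.Adj z x) (hza : ¬ G.Adj z a) (hzb : ¬ G.Adj z b) (hzc : ¬ G.Adj z c)
    (hab : G.Adj a b) (hbc : G.Adj b c) (hac : ¬ G.Adj a c)
    (hxb : G.Adj x b) (hxc : G.Adj x c) : G.Adj x a := by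
  by_contra hxa
  have hza' : z ≠ a := by rintro rfl; exact hzb hab
  have hzb' : z ≠ b := by rintro rfl; exact hzc hbc
  have hzc' : z ≠ c := by rintro rfl; exact hzb hbc.symm
  have hxa' : x ≠ a := by rintro rfl; exact hza hzx
  have hac' : a ≠ c := by rintro rfl; exact hxa hxc
  exact hG z x b a c ⟨hzx.ne, hzb', hza', hzc', hxb.ne, hxa', hxc.ne, hab.ne', hbc.ne, hac',
    hzx, hxb, hab.symm, hxc, hbc, hzb, hza, hzc, hxa, hac⟩

section Embedding

variable {α : Type*} {G : SimpleGraph V} {H : SimpleGraph α} {x z : V}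

theorem BullFree.adj_of_walk (hG : BullFree G) (f : H ↪g G) (hH : H.CliqueFree 3)
    (hzx : G.Adj z x) (hz : ∀ i, ¬ G.Adj z (f i)) {u w : α} (p : H.Walk u w) {v : α}
    (huv : H.Adj u v) (hxu : G.Adj x (f u)) (hxv : G.Adj x (f v)) : G.Adj x (f w) := by
  induction p generalizing v with
  | nil => exact hxu
  | @cons u a _ hua _ ih =>
    have hav : ¬ H.Adj a v := fun hav ↦
      isIndepSet_neighborSet_of_triangleFree H hH u hua huv hav.ne hav
    have hxa : G.Adj x (f a) :=
      hG.adj_of_pendant_triangle hzx (hz a) (hz u) (hz v) (f.map_adj_iff.2 hua.symm)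
        (f.map_adj_iff.2 huv) (f.map_adj_iff.not.2 hav) hxu hxv
    exact ih hua.symm hxa hxu

theorem BullFree.isIndepSet_or_forall_adj (hG : BullFree G) (f : H ↪g G) (hH : H.CliqueFree 3)
    (hconn : H.Preconnected) (hzx : G.Adj z x) (hz : ∀ i, ¬ G.Adj z (f i)) :
    H.IsIndepSet {i | G.Adj x (f i)} ∨ ∀ i, G.Adj x (f i) := by
  refine or_iff_not_imp_left.2 fun hdep w ↦ ?_
  obtain ⟨u, hxu, v, hxv, huv⟩ : ∃ u, G.Adj x (f u) ∧ ∃ v, G.Adj x (f v) ∧ H.Adj u v := by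
    by_contra! hindep
    exact hdep fun u hxu v hxv _ ↦ hindep u hxu v hxv
  obtain ⟨p⟩ := hconn u w
  exact hG.adj_of_walk f hH hzx hz p huv hxu hxv

end Embedding

theorem cliqueFree_three_cycleGraph (n : ℕ) : (cycleGraph (n + 4)).CliqueFree 3 := by
  intro s hs
  obtain ⟨a, b, c, hab, hac, hbc, -⟩ := is3Clique_iff.1 hs
  have one_ne : (1 : Fin (n + 4)) ≠ 0 := by simp
  have three_ne : (1 + 1 + 1 : Fin (n + 4)) ≠ 0 := by
    rw [Ne, Fin.ext_iff]
    simp [Fin.val_add, Nat.mod_eq_of_lt (show 3 < n + 4 by lia)]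
  rw [cycleGraph_adj] at hab hac hbc
  -- Three signs sum to ±1 or ±3, so the differences around a triangle cannot cancel.
  grind

theorem two_mul_card_le_of_isIndepSet_cycleGraph {n : ℕ} {s : Finset (Fin (n + 2))}
    (hs : (cycleGraph (n + 2)).IsIndepSet (s : Set (Fin (n + 2)))) : 2 * s.card ≤ n + 2 := by
  let t := s.map (addRightEmbedding 1)
  have hdisj : Disjoint s t := by
    rw [Finset.disjoint_left]
    intro i hi hit
    obtain ⟨j, hj, rfl⟩ := Finset.mem_map.1 hit
    have hadj : (cycleGraph (n + 2)).Adj j (j + 1) := by simp [cycleGraph_adj]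
    exact hs hj hi hadj.ne hadj
  calc 2 * s.card = s.card + t.card := by rw [Finset.card_map, two_mul]
    _ = (s.disjUnion t hdisj).card := (Finset.card_disjUnion s t hdisj).symm
    _ ≤ n + 2 := by simpa only [Fintype.card_fin] using Finset.card_le_univ (s.disjUnion t hdisj)

theorem BullFree.two_mul_card_adj_le_or_card_adj_eq {G : SimpleGraph V} [DecidableRel G.Adj]
    (hG : BullFree G) {n : ℕ} (f : cycleGraph (n + 4) ↪g G) {x z : V} (hzx : G.Adj z x)
    (hz : ∀ i, ¬ G.Adj z (f i)) :
    2 * (Finset.univ.filter fun i ↦ G.Adj x (f i)).card ≤ n + 4 ∨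
      (Finset.univ.filter fun i ↦ G.Adj x (f i)).card = n + 4 := by
  refine (hG.isIndepSet_or_forall_adj f (cliqueFree_three_cycleGraph n) cycleGraph_preconnected
    hzx hz).imp (fun hindep ↦ two_mul_card_le_of_isIndepSet_cycleGraph ?_) fun hall ↦ ?_
  · rwa [Finset.coe_filter_univ]
  · rw [Finset.filter_true_of_mem fun i _ ↦ hall i, Finset.card_fin]

/-- The vertex list of an induced 5-cycle, as an embedding of Mathlib's cycle graph; this makes
results about induced subgraphs applicable to `IsInducedC5`. -/
def IsInducedC5.embedding {G : SimpleGraph V} {c : Fin 5 → V} (hc : IsInducedC5 G c) :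
    cycleGraph 5 ↪g G where
  toFun := c
  inj' := hc.1
  map_rel_iff' {i j} := by
    rw [Function.Embedding.coeFn_mk, hc.2, cycleGraph_adj, sub_eq_iff_eq_add', sub_eq_iff_eq_add',
      or_comm, add_comm j, add_comm i]

theorem stmt4 (G : SimpleGraph V) [DecidableRel G.Adj] (hB : BullFree G)
    (c : Fin 5 → V) (hc : IsInducedC5 G c)
    (z : V) (hz : z ∉ Set.range c) (hz0 : ∀ i : Fin 5, ¬ G.Adj z (c i))
    (x : V) (hx : x ∉ Set.range c) (hzx : G.Adj z x)
    (k : ℕ) (hk : nbrCount G c x = k) (hk1 : 1 ≤ k) :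
    k = 1 ∨ k = 2 ∨ k = 5 := by
  have hcard : 2 * nbrCount G c x ≤ 5 ∨ nbrCount G c x = 5 :=
    hB.two_mul_card_adj_le_or_card_adj_eq hc.embedding hzx hz0
  lia
end

section
/- Let G be a prime (P6, bull)-free graph containing an induced 5-cycle C such that some vertex of G has no neighbor on C. Then no vertex outside C has exactly three neighbors on C and no vertex outside C is adjacent to all five vertices of C. -/
open SimpleGraph

variable {V : Type*}

/-! Let `x` be anticomplete to the cycle. Primality yields a vertex anticomplete to the cycle with a
neighbor `u` mixed on it, and such a `u` must have exactly two neighbors `c p`, `c (p + 2)` there.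
If some vertex were complete to the cycle, then the non-complete vertices that are mixed on the
cycle or have a mixed neighbor would form a proper homogeneous set.

A vertex with three neighbors on the cycle is a clone of some `c i`, adjacent to `c i`. Let `Z` be
the component of `c i` in the graph induced on the clones of `c i`. Replacing `c i` by a clone gives
another induced 5-cycle, so adjacent clones `p`, `q` can play the roles of `c i` and of the given
vertex. Bull-freeness then makes `x` anticomplete to `Z`, and it makes every vertex adjacent to `p`
but not to `q` a clone, complete to the cycle through `p`, or adjacent to all but one of its
vertices. The second case is excluded above and the third by the traces that `u` leaves on the
cycles so obtained, so `Z` is a proper homogeneous set. -/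

section

variable {G : SimpleGraph V} {S : Set V} {c : Fin 5 → V} {i : Fin 5} {t u v w x y z : V}

theorem BullFree.false_of_adj (hB : BullFree G) (a b c d e : V)
    (hab : G.Adj a b) (hbc : G.Adj b c) (hcd : G.Adj c d) (hbe : G.Adj b e) (hce : G.Adj c e)
    (hac : ¬ G.Adj a c) (had : ¬ G.Adj a d) (hae : ¬ G.Adj a e) (hbd : ¬ G.Adj b d)
    (hde : ¬ G.Adj d e) : False := by
  refine hB a b c d e ?_
  unfold IsBull
  grind [G.adj_comm]

theorem P6Free.false_of_adj (hP : P6Free G) (a b c d e f : V)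
    (hab : G.Adj a b) (hbc : G.Adj b c) (hcd : G.Adj c d) (hde : G.Adj d e) (hef : G.Adj e f)
    (hac : ¬ G.Adj a c) (had : ¬ G.Adj a d) (hae : ¬ G.Adj a e) (haf : ¬ G.Adj a f)
    (hbd : ¬ G.Adj b d) (hbe : ¬ G.Adj b e) (hbf : ¬ G.Adj b f)
    (hce : ¬ G.Adj c e) (hcf : ¬ G.Adj c f) (hdf : ¬ G.Adj d f) : False := by
  have hadj : ∀ i j : Fin 6, G.Adj (![a, b, c, d, e, f] i) (![a, b, c, d, e, f] j) ↔
      (i.val + 1 = j.val ∨ j.val + 1 = i.val) := by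
    intro i j
    fin_cases i <;> fin_cases j <;> simp [*, G.adj_comm]
  refine hP ⟨![a, b, c, d, e, f], fun i j hij ↦ ?_, hadj⟩
  have hnbr : ∀ k : Fin 6, (i.val + 1 = k.val ∨ k.val + 1 = i.val) ↔
      (j.val + 1 = k.val ∨ k.val + 1 = j.val) := fun k ↦ by rw [← hadj i k, ← hadj j k, hij]
  clear hij hadj
  decide +revert

/-- `v` is complete to `S`: it is adjacent to every vertex of `S` (so `v ∉ S`). -/
def IsCompleteTo (G : SimpleGraph V) (v : V) (S : Set V) : Prop := ∀ s ∈ S, G.Adj v s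

/-- `v` is anticomplete to `S`: it has no neighbor in `S`, but may itself belong to `S`. -/
def IsAnticompleteTo (G : SimpleGraph V) (v : V) (S : Set V) : Prop := ∀ s ∈ S, ¬ G.Adj v s

/-- `v` is mixed on `S`: it has both a neighbor and a non-neighbor in `S`. The vertices outside `S`
with this property are the ones preventing `S` from being homogeneous. -/
def IsMixedOn (G : SimpleGraph V) (v : V) (S : Set V) : Prop :=
  ¬ IsCompleteTo G v S ∧ ¬ IsAnticompleteTo G v S

theorem isCompleteTo_range : IsCompleteTo G v (Set.range c) ↔ ∀ i, G.Adj v (c i) :=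
  Set.forall_mem_range

theorem isAnticompleteTo_range : IsAnticompleteTo G v (Set.range c) ↔ ∀ i, ¬ G.Adj v (c i) :=
  Set.forall_mem_range

theorem isMixedOn_range :
    IsMixedOn G v (Set.range c) ↔ (∃ i, ¬ G.Adj v (c i)) ∧ ∃ i, G.Adj v (c i) := by
  simp [IsMixedOn, isCompleteTo_range, isAnticompleteTo_range]

theorem IsMixedOn.exists_adj_of_preconnected (hy : IsMixedOn G y S)
    (hS : (G.induce S).Preconnected) :
    ∃ p ∈ S, ∃ q ∈ S, G.Adj p q ∧ G.Adj y p ∧ ¬ G.Adj y q := by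
  simp only [IsMixedOn, IsCompleteTo, IsAnticompleteTo, not_forall, not_not] at hy
  obtain ⟨⟨b, hb, hyb⟩, a, ha, hya⟩ := hy
  obtain ⟨path⟩ := hS ⟨a, ha⟩ ⟨b, hb⟩
  obtain ⟨d, -, hp, hq⟩ := path.exists_boundary_dart {s | G.Adj y s} hya hyb
  exact ⟨d.fst, d.fst.2, d.snd, d.snd.2, d.adj, hp, hq⟩

theorem isMixedOn_of_mem (hS : (G.induce S).Preconnected) (hS' : S.Nontrivial) (ht : t ∈ S) :
    IsMixedOn G t S := by
  have := hS'.coe_sort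
  obtain ⟨s, hts⟩ := hS.exists_adj_of_nontrivial ⟨t, ht⟩
  exact ⟨fun h ↦ G.irrefl (h t ht), fun h ↦ h s s.2 hts⟩

theorem BullFree.adj_of_isMixedOn (hB : BullFree G) (hS : (G.induce S).Preconnected)
    (hx : IsAnticompleteTo G x S) (hz : IsCompleteTo G z S) (hxz : G.Adj x z)
    (hy : IsMixedOn G y S) (hxy : ¬ G.Adj x y) : G.Adj z y := by
  obtain ⟨p, hp, q, hq, hpq, hyp, hyq⟩ := hy.exists_adj_of_preconnected hS
  grind [G.adj_comm, hx p hp, hx q hq, hz p hp, hz q hq, hB.false_of_adj x z p y q]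

theorem exists_adj_isMixedOn (hB : BullFree G) (hPr : IsPrimeGraph G)
    (hS : (G.induce S).Preconnected) (hS' : S.Nontrivial) (hx : IsAnticompleteTo G x S) :
    ∃ x', IsAnticompleteTo G x' S ∧ ∃ u, G.Adj x' u ∧ IsMixedOn G u S := by
  by_contra! hmixed
  -- If the claim fails, then `D` is complete to `S` and `T` contains every vertex mixed on `S`. A
  -- vertex outside `T` is anticomplete to `S` and hence to `T`, or complete to `S`, and then a
  -- non-neighbor of it in `T` would give a bull.
  let D : Set V := {d | ¬ IsAnticompleteTo G d S ∧ ∃ a, IsAnticompleteTo G a S ∧ G.Adj a d}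
  let T : Set V := {t | ¬ IsAnticompleteTo G t S ∧ t ∉ D ∧ ∀ d ∈ D, G.Adj d t}
  have hD : ∀ d ∈ D, IsCompleteTo G d S := by
    rintro d ⟨hd, a, ha, had⟩
    by_contra h
    exact hmixed a ha d had ⟨h, hd⟩
  have hT : ∀ t, IsMixedOn G t S → t ∈ T := by
    refine fun t ht ↦ ⟨ht.2, fun h ↦ ht.1 (hD t h), fun d hd ↦ ?_⟩
    have ⟨_, a, ha, had⟩ := hd
    exact hB.adj_of_isMixedOn hS ha (hD d hd) had ht fun hat ↦ hmixed a ha t hat ht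
  refine hPr ⟨T, fun v hv ↦ ?_, ?_, fun h ↦ (h ▸ Set.mem_univ x : x ∈ T).1 hx⟩
  · by_cases hvA : IsAnticompleteTo G v S
    · exact .inr fun t ht hvt ↦ ht.2.1 ⟨ht.1, v, hvA, hvt⟩
    refine .inl fun t ht ↦ ?_
    by_cases hvD : v ∈ D
    · exact ht.2.2 v hvD
    have hvS : IsCompleteTo G v S := by
      by_contra h
      exact hv (hT v ⟨h, hvA⟩)
    obtain ⟨d, hd, hdv⟩ : ∃ d ∈ D, ¬ G.Adj d v := by
      by_contra! h
      exact hv ⟨hvA, hvD, h⟩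
    have ⟨_, a, ha, had⟩ := hd
    obtain ⟨s, hs, hts⟩ : ∃ s ∈ S, G.Adj t s := by simpa [IsAnticompleteTo] using ht.1
    have hav : ¬ G.Adj a v := fun h ↦ hvD ⟨hvA, a, ha, h⟩
    have hat : ¬ G.Adj a t := fun h ↦ ht.2.1 ⟨ht.1, a, ha, h⟩
    grind [G.adj_comm, ha s hs, hvS s hs, hD d hd s hs, ht.2.2 d hd, hB.false_of_adj a d s v t]
  · obtain ⟨a, ha, b, hb, hab⟩ := hS'
    exact ⟨a, hT a (isMixedOn_of_mem hS ⟨a, ha, b, hb, hab⟩ ha),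
      b, hT b (isMixedOn_of_mem hS ⟨a, ha, b, hb, hab⟩ hb), hab⟩

theorem exists_connected_induce_subset (R : Set V) {a : V} (ha : a ∈ R) :
    ∃ Z ⊆ R, a ∈ Z ∧ (G.induce Z).Connected ∧ ∀ p ∈ Z, ∀ q ∈ R, G.Adj p q → q ∈ Z := by
  let F : Set (Set V) := {T | T ⊆ R ∧ a ∈ T ∧ (G.induce T).Connected}
  have haF : {a} ∈ F := ⟨by simpa using ha, rfl, by simp⟩
  have hZ : (G.induce (⋃₀ F)).Connected :=
    induce_sUnion_connected_of_pairwise_not_disjoint ⟨_, haF⟩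
      (fun hs ht ↦ ⟨a, hs.2.1, ht.2.1⟩) fun hs ↦ hs.2.2
  have hZR : ⋃₀ F ⊆ R := Set.sUnion_subset fun T hT ↦ hT.1
  have haZ : a ∈ ⋃₀ F := ⟨{a}, haF, rfl⟩
  refine ⟨⋃₀ F, hZR, haZ, hZ, fun p hp q hq hpq ↦ ?_⟩
  exact ⟨⋃₀ F ∪ {q}, ⟨Set.union_subset hZR (by simpa using hq), .inl haZ,
    connected_induce_union hZ.preconnected .of_subsingleton hp rfl hpq⟩, .inr rfl⟩

theorem isInducedC5_of_adj_iff (h : ∀ i j, G.Adj (c i) (c j) ↔ (j = i + 1 ∨ i = j + 1)) :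
    IsInducedC5 G c := by
  refine ⟨fun i j hij ↦ ?_, h⟩
  have hnbr : ∀ k, (k = i + 1 ∨ i = k + 1) ↔ (k = j + 1 ∨ j = k + 1) := fun k ↦ by
    rw [← h i k, ← h j k, hij]
  clear hij
  decide +revert

theorem fin_five_eq_add (i j : Fin 5) :
    j = i ∨ j = i + 1 ∨ j = i + 2 ∨ j = i + 3 ∨ j = i + 4 := by
  decide +revert

theorem IsMixedOn.exists_adj_not_adj_succ (hy : IsMixedOn G y (Set.range c)) :
    ∃ i, G.Adj y (c i) ∧ ¬ G.Adj y (c (i + 1)) := by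
  by_contra! h
  obtain ⟨⟨j, hj⟩, i, hi⟩ := isMixedOn_range.1 hy
  grind [fin_five_eq_add i j]

namespace IsInducedC5

theorem preconnected_induce_range (hc : IsInducedC5 G c) :
    (G.induce (Set.range c)).Preconnected := by
  let f : cycleGraph 5 →g G.induce (Set.range c) :=
    { toFun := Set.rangeFactorization c
      map_rel' := fun {i j} hij ↦ by
        refine (hc.2 i j).2 ?_
        rw [cycleGraph_adj] at hij
        decide +revert }
  exact cycleGraph_preconnected.map f Set.rangeFactorization_surjective

theorem range_nontrivial (hc : IsInducedC5 G c) : (Set.range c).Nontrivial :=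
  ⟨c 0, ⟨0, rfl⟩, c 1, ⟨1, rfl⟩, hc.1.ne (by decide)⟩

theorem comp_neg (hc : IsInducedC5 G c) : IsInducedC5 G fun j ↦ c (-j) :=
  isInducedC5_of_adj_iff fun i j ↦ by grind [hc.2]

theorem exists_adj_iff (hP : P6Free G) (hB : BullFree G) (hc : IsInducedC5 G c)
    (hx : IsAnticompleteTo G x (Set.range c)) (hxy : G.Adj x y)
    (hy : IsMixedOn G y (Set.range c)) :
    ∃ i, ∀ j, G.Adj y (c j) ↔ j = i ∨ j = i + 2 := by
  rw [isAnticompleteTo_range] at hx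
  obtain ⟨i, hi, hi1⟩ := hy.exists_adj_not_adj_succ
  have hi4 : ¬ G.Adj y (c (i + 4)) := by
    grind [G.adj_comm, hc.2, hB.false_of_adj x y (c i) (c (i + 1)) (c (i + 4))]
  have h23 : ¬ (G.Adj y (c (i + 2)) ∧ G.Adj y (c (i + 3))) := by
    grind [G.adj_comm, hc.2, hB.false_of_adj x y (c (i + 2)) (c (i + 1)) (c (i + 3))]
  have h23' : G.Adj y (c (i + 2)) ∨ G.Adj y (c (i + 3)) := by
    grind [G.adj_comm, hc.2, hP.false_of_adj x y (c i) (c (i + 1)) (c (i + 2)) (c (i + 3))]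
  rcases h23' with h2 | h3
  · exact ⟨i, fun j ↦ by grind [fin_five_eq_add i j]⟩
  · exact ⟨i + 3, fun j ↦ by grind [fin_five_eq_add i j]⟩

theorem adj_of_isMixedOn (hP : P6Free G) (hB : BullFree G) (hc : IsInducedC5 G c)
    (hx : IsAnticompleteTo G x (Set.range c)) (hw : IsAnticompleteTo G w (Set.range c))
    (hxw : G.Adj x w) (hxy : G.Adj x y) (hy : IsMixedOn G y (Set.range c)) : G.Adj w y := by
  obtain ⟨i, hi⟩ := hc.exists_adj_iff hP hB hx hxy hy
  rw [isAnticompleteTo_range] at hx hw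
  grind [G.adj_comm, hc.2, hP.false_of_adj w x y (c i) (c (i + 4)) (c (i + 3))]

theorem adj_and_adj_of_isCompleteTo (hP : P6Free G) (hB : BullFree G) (hc : IsInducedC5 G c)
    (hx : IsAnticompleteTo G x (Set.range c)) (hz : IsCompleteTo G z (Set.range c))
    (hxy : G.Adj x y) (hy : IsMixedOn G y (Set.range c)) : G.Adj z x ∧ G.Adj z y := by
  obtain ⟨i, hi⟩ := hc.exists_adj_iff hP hB hx hxy hy
  rw [isAnticompleteTo_range] at hx
  rw [isCompleteTo_range] at hz
  have hzy : G.Adj z y := by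
    grind [G.adj_comm, hc.2, hB.false_of_adj y (c i) z (c (i + 3)) (c (i + 1))]
  refine ⟨?_, hzy⟩
  grind [G.adj_comm, hc.2, hB.false_of_adj x y z (c (i + 3)) (c i)]

theorem adj_of_isCompleteTo_of_isMixedOn (hP : P6Free G) (hB : BullFree G) (hPr : IsPrimeGraph G)
    (hc : IsInducedC5 G c) (hx : IsAnticompleteTo G x (Set.range c))
    (hz : IsCompleteTo G z (Set.range c)) (hy : IsMixedOn G y (Set.range c)) : G.Adj z y := by
  have hconn := hc.preconnected_induce_range
  obtain ⟨a, ha, u, hau, hu⟩ := exists_adj_isMixedOn hB hPr hconn hc.range_nontrivial hx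
  have haz : G.Adj a z := (hc.adj_and_adj_of_isCompleteTo hP hB ha hz hau hu).1.symm
  by_cases hay : G.Adj a y
  · exact (hc.adj_and_adj_of_isCompleteTo hP hB ha hz hay hy).2
  · exact hB.adj_of_isMixedOn hconn ha hz haz hy hay

theorem not_isCompleteTo (hP : P6Free G) (hB : BullFree G) (hPr : IsPrimeGraph G)
    (hc : IsInducedC5 G c) (hx : IsAnticompleteTo G x (Set.range c)) :
    ¬ IsCompleteTo G z (Set.range c) := by
  intro hz
  have hconn := hc.preconnected_induce_range
  let U : Set V := {t | ¬ IsCompleteTo G t (Set.range c) ∧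
    (IsAnticompleteTo G t (Set.range c) → ∃ y, G.Adj t y ∧ IsMixedOn G y (Set.range c))}
  have hU : ∀ t, IsMixedOn G t (Set.range c) → t ∈ U := fun t ht ↦ ⟨ht.1, fun h ↦ absurd h ht.2⟩
  refine hPr ⟨U, fun v hv ↦ ?_, ?_, fun h ↦ (h ▸ Set.mem_univ z : z ∈ U).1 hz⟩
  · by_cases hvC : IsCompleteTo G v (Set.range c)
    · refine .inl fun t ht ↦ ?_
      by_cases htA : IsAnticompleteTo G t (Set.range c)
      · obtain ⟨y, hty, hy⟩ := ht.2 htA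
        exact (hc.adj_and_adj_of_isCompleteTo hP hB htA hvC hty hy).1
      · exact hc.adj_of_isCompleteTo_of_isMixedOn hP hB hPr hx hvC ⟨ht.1, htA⟩
    · have hvA : IsAnticompleteTo G v (Set.range c) := by
        by_contra h
        exact hv (hU v ⟨hvC, h⟩)
      have hvmixed : ∀ y, G.Adj v y → ¬ IsMixedOn G y (Set.range c) := fun y hvy hy ↦
        hv ⟨hvC, fun _ ↦ ⟨y, hvy, hy⟩⟩
      refine .inr fun t ht hvt ↦ ?_
      have htA : IsAnticompleteTo G t (Set.range c) := by
        by_contra h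
        exact hvmixed t hvt ⟨ht.1, h⟩
      obtain ⟨y, hty, hy⟩ := ht.2 htA
      exact hvmixed y (hc.adj_of_isMixedOn hP hB htA hvA hvt.symm hty hy) hy
  · exact ⟨c 0, hU _ (isMixedOn_of_mem hconn hc.range_nontrivial ⟨0, rfl⟩), c 1,
      hU _ (isMixedOn_of_mem hconn hc.range_nontrivial ⟨1, rfl⟩), hc.1.ne (by decide)⟩

end IsInducedC5

theorem isAnticompleteTo_range_update (hx : IsAnticompleteTo G x (Set.range c))
    (hxt : ¬ G.Adj x t) : IsAnticompleteTo G x (Set.range (Function.update c i t)) := by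
  rw [isAnticompleteTo_range] at hx ⊢
  intro j
  rcases eq_or_ne j i with rfl | hj <;> simp_all

theorem isMixedOn_range_update {p : Fin 5} (hp : ∀ j, G.Adj u (c j) ↔ j = p ∨ j = p + 2) :
    IsMixedOn G u (Set.range (Function.update c i t)) := by
  obtain ⟨j, hj, huj⟩ := (by decide : ∀ i p : Fin 5, ∃ j ≠ i, j = p ∨ j = p + 2) i p
  obtain ⟨k, hk, huk⟩ := (by decide : ∀ i p : Fin 5, ∃ k ≠ i, ¬ (k = p ∨ k = p + 2)) i p
  rw [← hp] at huj huk
  exact isMixedOn_range.2 ⟨⟨k, by simpa [hk] using huk⟩, j, by simpa [hj] using huj⟩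

/-- `t` is a clone of `c i` on the cycle `c`: it can replace `c i` in the cycle. The adjacency
between `t` and `c i` is left free, and `c i` is a clone of itself. -/
def IsClone (G : SimpleGraph V) (c : Fin 5 → V) (i : Fin 5) (t : V) : Prop :=
  ∀ j ≠ i, G.Adj t (c j) ↔ G.Adj (c i) (c j)

namespace IsClone

theorem isInducedC5_update (hc : IsInducedC5 G c) (ht : IsClone G c i t) :
    IsInducedC5 G (Function.update c i t) := by
  refine isInducedC5_of_adj_iff fun j k ↦ ?_
  by_cases hj : j = i <;> by_cases hk : k = i
  · simp [hj, hk]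
  · simpa [hj, hk] using (ht k hk).trans (hc.2 i k)
  · simpa [hj, hk, G.adj_comm, or_comm] using (ht j hj).trans (hc.2 i j)
  · simpa [hj, hk] using hc.2 j k

theorem update_iff (hw : IsClone G c i w) :
    IsClone G (Function.update c i w) i t ↔ IsClone G c i t := by
  refine forall₂_congr fun j hj ↦ ?_
  simp [hj, hw j hj]

theorem comp_neg (ht : IsClone G c i t) : IsClone G (fun j ↦ c (-j)) (-i) t := by
  intro j hj
  simpa using ht (-j) (by grind)

theorem not_adj_of_isAnticompleteTo (hB : BullFree G) (hc : IsInducedC5 G c)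
    (hx : IsAnticompleteTo G x (Set.range c)) (ht : IsClone G c i t) (hti : G.Adj t (c i)) :
    ¬ G.Adj x t := by
  rw [isAnticompleteTo_range] at hx
  unfold IsClone at ht
  grind [G.adj_comm, hc.2, hB.false_of_adj x t (c (i + 1)) (c (i + 2)) (c i)]

theorem adj_iff (hP : P6Free G) (hB : BullFree G) (hc : IsInducedC5 G c)
    (hx : IsAnticompleteTo G x (Set.range c)) (hxu : G.Adj x u)
    (hu : IsMixedOn G u (Set.range c)) (ht : IsClone G c i t) (hxt : ¬ G.Adj x t) :
    G.Adj u t ↔ G.Adj u (c i) := by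
  obtain ⟨p, hp⟩ := hc.exists_adj_iff hP hB hx hxu hu
  obtain ⟨q, hq⟩ := (ht.isInducedC5_update hc).exists_adj_iff hP hB
    (isAnticompleteTo_range_update hx hxt) hxu (isMixedOn_range_update hp)
  have hpq : p = q := by
    refine (by decide : ∀ i p q : Fin 5,
      (∀ j ≠ i, (j = p ∨ j = p + 2) ↔ (j = q ∨ j = q + 2)) → p = q) i p q fun j hj ↦ ?_
    rw [← hp, ← hq, Function.update_of_ne hj]
  rw [hp, hpq, ← hq, Function.update_self]

theorem update_of_adj_iff_ne (hc : IsInducedC5 G c) (hv : IsClone G c i v)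
    (hw : ∀ j, G.Adj w (c j) ↔ j ≠ i + 4) (hwv : ¬ G.Adj w v) :
    IsClone G (Function.update c i v) (i + 2) w := by
  intro j hj
  have hv2 : ¬ G.Adj v (c (i + 2)) := by grind [hv (i + 2), hc.2]
  rcases eq_or_ne j i with rfl | hji
  · simp [hwv, G.adj_comm, hv2]
  · grind [Function.update_of_ne hji, hc.2]

theorem adj_of_adj_iff_ne (hP : P6Free G) (hB : BullFree G) (hc : IsInducedC5 G c)
    (hx : IsAnticompleteTo G x (Set.range c)) (hxu : G.Adj x u)
    (hu : IsMixedOn G u (Set.range c)) (hv : IsClone G c i v) (hvi : G.Adj v (c i))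
    (hw : ∀ j, G.Adj w (c j) ↔ j ≠ i + 4) : G.Adj w v := by
  by_contra hwv
  obtain ⟨p, hp⟩ := hc.exists_adj_iff hP hB hx hxu hu
  have hxv := hv.not_adj_of_isAnticompleteTo hB hc hx hvi
  have huv := hv.adj_iff hP hB hc hx hxu hu hxv
  have hx' := isAnticompleteTo_range.1 hx
  have hxw : ¬ G.Adj x w := by
    grind [G.adj_comm, hc.2, hB.false_of_adj x w (c i) (c (i + 4)) (c (i + 1))]
  have huw : G.Adj u w ↔ G.Adj u (c (i + 2)) := by
    simpa using (hv.update_of_adj_iff_ne hc hw hwv).adj_iff hP hB (hv.isInducedC5_update hc)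
      (isAnticompleteTo_range_update hx hxv) hxu (isMixedOn_range_update hp) hxw
  unfold IsClone at hv
  rcases fin_five_eq_add i p with rfl | rfl | rfl | rfl | rfl
  · grind [G.adj_comm, hc.2, hB.false_of_adj x u (c p) (c (p + 4)) w]
  · grind [G.adj_comm, hc.2, hP.false_of_adj x u (c (i + 3)) w (c i) v]
  · grind [G.adj_comm, hc.2, hB.false_of_adj (c i) w u x (c (i + 2))]
  · grind [G.adj_comm, hc.2, hB.false_of_adj x u (c i) w v]
  · grind [G.adj_comm, hc.2, hP.false_of_adj x u (c (i + 4)) (c i) w (c (i + 2))]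

theorem isClone_or_isCompleteTo_or_adj_iff_ne (hB : BullFree G) (hc : IsInducedC5 G c)
    (hv : IsClone G c i v) (hvi : G.Adj v (c i)) (hwi : G.Adj w (c i)) (hwv : ¬ G.Adj w v) :
    IsClone G c i w ∨ IsCompleteTo G w (Set.range c) ∨
      (∀ j, G.Adj w (c j) ↔ j ≠ i + 1) ∨ ∀ j, G.Adj w (c j) ↔ j ≠ i + 4 := by
  rw [isCompleteTo_range]
  unfold IsClone at hv
  have hw12 : G.Adj w (c (i + 1)) ∨ G.Adj w (c (i + 2)) := by
    grind [G.adj_comm, hc.2, hB.false_of_adj w (c i) (c (i + 1)) (c (i + 2)) v]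
  have hw43 : G.Adj w (c (i + 4)) ∨ G.Adj w (c (i + 3)) := by
    grind [G.adj_comm, hc.2, hB.false_of_adj w (c i) (c (i + 4)) (c (i + 3)) v]
  by_cases hw1 : G.Adj w (c (i + 1)) <;> by_cases hw4 : G.Adj w (c (i + 4))
  · have hw23 : G.Adj w (c (i + 2)) ↔ G.Adj w (c (i + 3)) := by
      grind [G.adj_comm, hc.2, hB.false_of_adj v (c (i + 1)) (c (i + 2)) (c (i + 3)) w,
        hB.false_of_adj v (c (i + 4)) (c (i + 3)) (c (i + 2)) w]
    by_cases hw2 : G.Adj w (c (i + 2))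
    · exact .inr (.inl fun j ↦ by grind [fin_five_eq_add i j])
    · exact .inl fun j hj ↦ by grind [hc.2, fin_five_eq_add i j]
  · have hw2 : G.Adj w (c (i + 2)) := by
      grind [G.adj_comm, hc.2, hB.false_of_adj (c (i + 4)) (c i) (c (i + 1)) (c (i + 2)) w]
    exact .inr (.inr (.inr fun j ↦ by grind [fin_five_eq_add i j]))
  · have hw3 : G.Adj w (c (i + 3)) := by
      grind [G.adj_comm, hc.2, hB.false_of_adj (c (i + 1)) (c i) (c (i + 4)) (c (i + 3)) w]
    exact .inr (.inr (.inl fun j ↦ by grind [fin_five_eq_add i j]))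
  · have := hB.false_of_adj (c (i + 1)) (c (i + 2)) (c (i + 3)) (c (i + 4)) w
    grind [G.adj_comm, hc.2]

theorem of_adj_of_not_adj (hP : P6Free G) (hB : BullFree G) (hPr : IsPrimeGraph G)
    (hc : IsInducedC5 G c) (hx : IsAnticompleteTo G x (Set.range c))
    (hv : IsClone G c i v) (hvi : G.Adj v (c i)) (hwi : G.Adj w (c i)) (hwv : ¬ G.Adj w v) :
    IsClone G c i w := by
  obtain ⟨a, ha, u, hau, hu⟩ :=
    exists_adj_isMixedOn hB hPr hc.preconnected_induce_range hc.range_nontrivial hx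
  have hrange : Set.range (fun j ↦ c (-j)) = Set.range c := neg_surjective.range_comp c
  rcases hv.isClone_or_isCompleteTo_or_adj_iff_ne hB hc hvi hwi hwv with hw | hw | hw | hw
  · exact hw
  · exact absurd hw (hc.not_isCompleteTo hP hB hPr hx)
  · exact absurd (hv.comp_neg.adj_of_adj_iff_ne hP hB hc.comp_neg (hrange ▸ ha) hau (hrange ▸ hu)
      (by simpa) fun j ↦ by grind) hwv
  · exact absurd (hv.adj_of_adj_iff_ne hP hB hc ha hau hu hvi hw) hwv

theorem not_adj (hP : P6Free G) (hB : BullFree G) (hPr : IsPrimeGraph G)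
    (hc : IsInducedC5 G c) (hx : IsAnticompleteTo G x (Set.range c)) (hv : IsClone G c i v) :
    ¬ G.Adj v (c i) := by
  intro hvi
  obtain ⟨Z, hZR, hiZ, hZ, hclosed⟩ :=
    exists_connected_induce_subset (G := G) {t | IsClone G c i t} (a := c i) fun _ _ ↦ .rfl
  have hxi : ¬ G.Adj x (c i) := isAnticompleteTo_range.1 hx i
  have hxZ : IsAnticompleteTo G x Z := by
    by_contra hxZ
    obtain ⟨p, hp, q, hq, hpq, hxp, hxq⟩ :=
      IsMixedOn.exists_adj_of_preconnected ⟨fun h ↦ hxi (h _ hiZ), hxZ⟩ hZ.preconnected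
    exact ((hZR hq).update_iff.2 (hZR hp)).not_adj_of_isAnticompleteTo hB
      ((hZR hq).isInducedC5_update hc) (isAnticompleteTo_range_update hx hxq) (by simpa) hxp
  have hhom : IsHomogeneous G Z := by
    intro w hw
    by_contra hmixed
    obtain ⟨p, hp, q, hq, hpq, hwp, hwq⟩ :=
      IsMixedOn.exists_adj_of_preconnected (not_or.1 hmixed) hZ.preconnected
    refine hw (hclosed p hp w ((hZR hp).update_iff.1 ?_) hwp.symm)
    exact ((hZR hp).update_iff.2 (hZR hq)).of_adj_of_not_adj hP hB hPr
      ((hZR hp).isInducedC5_update hc) (isAnticompleteTo_range_update hx (hxZ p hp))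
      (by simpa using hpq.symm) (by simpa) hwq
  refine hPr ⟨Z, hhom, ⟨v, hclosed _ hiZ v hv hvi.symm, c i, hiZ, hvi.ne⟩, fun h ↦ ?_⟩
  have h1 : IsClone G c i (c (i + 1)) := hZR (h ▸ Set.mem_univ _)
  have h2 := h1 (i + 2)
  clear * - hc h2
  grind [hc.2]

end IsClone

theorem exists_isClone_of_nbrCount_eq_three [DecidableRel G.Adj] (hB : BullFree G)
    (hc : IsInducedC5 G c) (hv : nbrCount G c v = 3) :
    ∃ i, IsClone G c i v ∧ G.Adj v (c i) := by
  have htriple : ∀ s : Finset (Fin 5), s.card = 3 →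
      ∃ i, s = {i + 4, i, i + 1} ∨ s = {i, i + 1, i + 3} := by decide
  obtain ⟨i, hi⟩ := htriple _ hv
  simp only [Finset.ext_iff, Finset.mem_filter_univ, Finset.mem_insert,
    Finset.mem_singleton] at hi
  rcases hi with hi | hi
  · exact ⟨i, fun j hj ↦ by grind [hc.2], by grind⟩
  · have := hB.false_of_adj (c (i + 4)) (c i) (c (i + 1)) (c (i + 2)) v
    grind [G.adj_comm, hc.2]

theorem isCompleteTo_range_of_nbrCount_eq_five [DecidableRel G.Adj] (hv : nbrCount G c v = 5) :
    IsCompleteTo G v (Set.range c) := by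
  rw [isCompleteTo_range]
  simpa using Finset.card_filter_eq_iff.1 (hv.trans (Finset.card_fin 5).symm)

end

theorem stmt8 (G : SimpleGraph V) [DecidableRel G.Adj]
    (hP : P6Free G) (hB : BullFree G) (hPr : IsPrimeGraph G)
    (c : Fin 5 → V) (hc : IsInducedC5 G c)
    (x : V) (hx : x ∉ Set.range c) (hx0 : ∀ i : Fin 5, ¬ G.Adj x (c i)) :
    ∀ v : V, v ∉ Set.range c → nbrCount G c v ≠ 3 ∧ nbrCount G c v ≠ 5 := by
  intro v _
  have hxC : IsAnticompleteTo G x (Set.range c) := isAnticompleteTo_range.2 hx0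
  constructor
  · intro h3
    obtain ⟨i, hv, hvi⟩ := exists_isClone_of_nbrCount_eq_three hB hc h3
    exact hv.not_adj hP hB hPr hc hxC hvi
  · intro h5
    exact hc.not_isCompleteTo hP hB hPr hxC (isCompleteTo_range_of_nbrCount_eq_five h5)
end
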